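/- The Hamiltonian flow preserves the Gibbs measure: let U : ℝ^p → ℝ be twice continuously differentiable, M a symmetric positive definite p×p real matrix, H(θ,r) = U(θ) + (1/2)·⟨r, M⁻¹ r⟩, and F(θ,r) = (M⁻¹ r, −∇U(θ)). Suppose φ : ℝ → (ℝ^p × ℝ^p) → (ℝ^p × ℝ^p) is a global flow of F, i.e. φ₀ = id, for every x the map t ↦ φₜ(x) is differentiable with derivative F(φₜ(x)), and each φₜ is a C¹ diffeomorphism. Then for every t, the map φₜ is measure-preserving for the measure μ on ℝ^p × ℝ^p having density exp(−H(θ,r)) with respect to Lebesgue measure. -/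

import Mathlib

open scoped RealInnerProductSpace
open MeasureTheory


section Aux

open Set Filter Topology

variable {E : Type*} [NormedAddCommGroup E] [NormedSpace ℝ E]

/-- Dependence on initial conditions, by a fencing argument. -/
lemma aux_gronwall (F : E → E) (φ : ℝ → E → E) (hφ0 : φ 0 = id)
    (hφ : ∀ x t, HasDerivAt (fun s : ℝ => φ s x) (F (φ t x)) t)
    (x : E) (T R K : ℝ)
    (hR : ∀ s ∈ Icc 0 T, ‖φ s x‖ ≤ R)
    (hK : 0 ≤ K)
    (hL : ∀ a ∈ Metric.closedBall (0 : E) (R + 1), ∀ b ∈ Metric.closedBall (0 : E) (R + 1),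
      ‖F b - F a‖ ≤ K * ‖b - a‖)
    (y : E) (hy : ‖y - x‖ * Real.exp ((K + 1) * T) ≤ 1) :
    ∀ s ∈ Icc 0 T, ‖φ s y - φ s x‖ ≤ ‖y - x‖ * Real.exp ((K + 1) * s) := by
  by_cases hxy : y = x
  · subst hxy
    intro s _
    simp
  have hpos : 0 < ‖y - x‖ := norm_pos_iff.2 (sub_ne_zero.2 hxy)
  have hd : ∀ s, HasDerivAt (fun s => φ s y - φ s x) (F (φ s y) - F (φ s x)) s :=
    fun s => (hφ y s).sub (hφ x s)
  have hB : ∀ s : ℝ, HasDerivAt (fun s : ℝ => ‖y - x‖ * Real.exp ((K + 1) * s))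
      (‖y - x‖ * (Real.exp ((K + 1) * s) * (K + 1))) s := by
    intro s
    have h1 : HasDerivAt (fun s : ℝ => (K + 1) * s) (K + 1) s := by
      simpa using (hasDerivAt_id s).const_mul (K + 1)
    exact (h1.exp).const_mul _
  refine image_norm_le_of_norm_deriv_right_lt_deriv_boundary
    (f' := fun s => F (φ s y) - F (φ s x))
    (fun s _ => (hd s).continuousAt.continuousWithinAt)
    (fun s _ => (hd s).hasDerivWithinAt) (by simp [hφ0]) hB ?_
  intro s hs heq
  have hsI : s ∈ Icc 0 T := Ico_subset_Icc_self hs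
  have hexp : 0 < Real.exp ((K + 1) * s) := Real.exp_pos _
  have hle : ‖φ s y - φ s x‖ ≤ 1 := by
    rw [heq]
    refine le_trans ?_ hy
    have : (K + 1) * s ≤ (K + 1) * T := by
      have := hsI.2
      gcongr
    gcongr
  have hx1 := hR s hsI
  have hy1 : ‖φ s y‖ ≤ R + 1 := by
    have := norm_le_norm_add_norm_sub' (φ s y) (φ s x)
    linarith
  have h2 := hL (φ s x) (by simp; linarith) (φ s y) (by simpa using hy1)
  rw [heq] at h2
  have : 0 < ‖y - x‖ * Real.exp ((K + 1) * s) := by positivity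
  calc ‖F (φ s y) - F (φ s x)‖ ≤ K * (‖y - x‖ * Real.exp ((K + 1) * s)) := h2
    _ < ‖y - x‖ * (Real.exp ((K + 1) * s) * (K + 1)) := by nlinarith

/-- Uniform differentiability of a `C¹` map on a closed ball. -/
lemma aux_unif [ProperSpace E] (F : E → E) (hF : ContDiff ℝ 1 F) (R : ℝ) (ε : ℝ) (hε : 0 < ε) :
    ∃ δ > 0, ∀ a ∈ Metric.closedBall (0 : E) R, ∀ b ∈ Metric.closedBall (0 : E) R,
      ‖b - a‖ < δ → ‖F b - F a - fderiv ℝ F a (b - a)‖ ≤ ε * ‖b - a‖ := by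
  have hc : Continuous (fderiv ℝ F) := hF.continuous_fderiv (by norm_num)
  have hu := (isCompact_closedBall (0 : E) R).uniformContinuousOn_of_continuous hc.continuousOn
  obtain ⟨δ, hδ, h⟩ := Metric.uniformContinuousOn_iff.1 hu ε hε
  refine ⟨δ, hδ, fun a ha b hb hab => ?_⟩
  have hconv : Convex ℝ (Metric.closedBall (0 : E) R ∩ Metric.ball a δ) :=
    (convex_closedBall _ _).inter (convex_ball _ _)
  refine hconv.norm_image_sub_le_of_norm_fderiv_le' (𝕜 := ℝ)
    (fun z _ => (hF.differentiable (by norm_num)) z) ?_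
    ⟨ha, Metric.mem_ball_self hδ⟩ ⟨hb, by simpa [dist_eq_norm] using hab⟩
  intro z hz
  have := h z hz.1 a ha (by simpa using hz.2)
  rw [dist_eq_norm] at this
  exact this.le

/-- An infinitesimally invariant bilinear form is invariant under the flow (forward time). -/
lemma aux_form [ProperSpace E] (F : E → E) (hF : ContDiff ℝ 1 F) (φ : ℝ → E → E)
    (hφ0 : φ 0 = id)
    (hφ : ∀ x t, HasDerivAt (fun s : ℝ => φ s x) (F (φ t x)) t)
    (ω : E →L[ℝ] E →L[ℝ] ℝ)
    (hω : ∀ y a b, ω (fderiv ℝ F y a) b + ω a (fderiv ℝ F y b) = 0)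
    (T : ℝ) (hT : 0 ≤ T) (hd : Differentiable ℝ (φ T)) (x v w : E) :
    ω (fderiv ℝ (φ T) x v) (fderiv ℝ (φ T) x w) = ω v w := by
  have hcx : Continuous (fun s => φ s x) :=
    continuous_iff_continuousAt.2 fun s => (hφ x s).continuousAt
  obtain ⟨R, hR⟩ := (isCompact_Icc (a := (0 : ℝ)) (b := T)).exists_bound_of_continuousOn
    hcx.continuousOn
  have hc : Continuous (fderiv ℝ F) := hF.continuous_fderiv (by norm_num)
  obtain ⟨K, hKb⟩ := (isCompact_closedBall (0 : E) (R + 1)).exists_bound_of_continuousOn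
    hc.continuousOn
  have hR0 : 0 ≤ R := (norm_nonneg _).trans (hR 0 ⟨le_rfl, hT⟩)
  have hK : 0 ≤ K := (norm_nonneg _).trans (hKb 0 (by simp; linarith))
  have hL : ∀ a ∈ Metric.closedBall (0 : E) (R + 1), ∀ b ∈ Metric.closedBall (0 : E) (R + 1),
      ‖F b - F a‖ ≤ K * ‖b - a‖ := fun a ha b hb =>
    (convex_closedBall (0 : E) (R + 1)).norm_image_sub_le_of_norm_fderiv_le (𝕜 := ℝ)
      (fun z _ => (hF.differentiable (by norm_num)) z) hKb ha hb
  set C := Real.exp ((K + 1) * T) with hC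
  have hC0 : 0 < C := Real.exp_pos _
  have hgr : ∀ y, ‖y - x‖ * C ≤ 1 → ∀ s ∈ Icc 0 T, ‖φ s y - φ s x‖ ≤ ‖y - x‖ * C := by
    intro y hy s hs
    refine (aux_gronwall F φ hφ0 hφ x T R K hR hK hL y hy s hs).trans ?_
    have : (K + 1) * s ≤ (K + 1) * T := by
      have := hs.2
      gcongr
    rw [hC]
    gcongr
  have hlim : ∀ u : E, Tendsto (fun h : ℝ => h⁻¹ • (φ T (x + h • u) - φ T x)) (𝓝[>] 0)
      (𝓝 (fderiv ℝ (φ T) x u)) := fun u =>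
    ((hd x).hasFDerivAt.hasLineDerivAt u).tendsto_slope_zero_right
  have hlim2 : Tendsto (fun h : ℝ => ω (h⁻¹ • (φ T (x + h • v) - φ T x))
      (h⁻¹ • (φ T (x + h • w) - φ T x)) - ω v w) (𝓝[>] 0)
      (𝓝 (ω (fderiv ℝ (φ T) x v) (fderiv ℝ (φ T) x w) - ω v w)) :=
    (((ω.isBoundedBilinearMap.continuous.tendsto
      (fderiv ℝ (φ T) x v, fderiv ℝ (φ T) x w)).comp
        ((hlim v).prodMk_nhds (hlim w)))).sub_const _
  -- the key bound
  have key : ∀ ε > 0, ‖ω (fderiv ℝ (φ T) x v) (fderiv ℝ (φ T) x w) - ω v w‖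
      ≤ ε * (2 * ‖ω‖ * C ^ 2 * ‖v‖ * ‖w‖ * T) := by
    intro ε hε
    obtain ⟨δ, hδ, hU⟩ := aux_unif F hF (R + 1) ε hε
    refine le_of_tendsto hlim2.norm ?_
    have hsm : ∀ u : E, ∀ᶠ h : ℝ in 𝓝[>] 0, ‖h • u‖ * C < min 1 δ := by
      intro u
      have : Tendsto (fun h : ℝ => ‖h • u‖ * C) (𝓝 0) (𝓝 (‖(0 : ℝ) • u‖ * C)) := by
        apply Continuous.tendsto (f := fun h : ℝ => ‖h • u‖ * C)
        fun_prop
      refine (this.mono_left nhdsWithin_le_nhds).eventually_lt_const ?_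
      simpa using hδ
    filter_upwards [hsm v, hsm w, self_mem_nhdsWithin] with h hv hw hpos
    have hpos : 0 < h := hpos
    -- facts for each direction
    have fact : ∀ u : E, ‖h • u‖ * C < min 1 δ → ∀ s ∈ Icc 0 T,
        ‖φ s (x + h • u) - φ s x‖ ≤ h * ‖u‖ * C ∧
        ‖F (φ s (x + h • u)) - F (φ s x)
          - fderiv ℝ F (φ s x) (φ s (x + h • u) - φ s x)‖ ≤ ε * (h * ‖u‖ * C) := by
      intro u hu s hs
      have hn : ‖h • u‖ = h * ‖u‖ := by rw [norm_smul, Real.norm_of_nonneg hpos.le]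
      have h1 : ‖φ s (x + h • u) - φ s x‖ ≤ ‖h • u‖ * C := by
        have := hgr (x + h • u) (by simpa using (hu.trans_le (min_le_left _ _)).le) s hs
        simpa using this
      have h2 := h1.trans_lt hu
      have hx1 := hR s hs
      have hy1 : ‖φ s (x + h • u)‖ ≤ R + 1 := by
        have := norm_le_norm_add_norm_sub' (φ s (x + h • u)) (φ s x)
        have := h2.trans_le (min_le_left _ _)
        linarith
      have h3 := hU (φ s x) (by simp; linarith) (φ s (x + h • u)) (by simpa using hy1)
        (h2.trans_le (min_le_right _ _))
      rw [hn] at h1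
      exact ⟨h1, h3.trans (by gcongr)⟩
    have hdg : ∀ u s, HasDerivAt (fun s => φ s (x + h • u) - φ s x)
        (F (φ s (x + h • u)) - F (φ s x)) s := fun u s => (hφ _ s).sub (hφ _ s)
    have hder : ∀ s, HasDerivAt
        (fun s => ω (φ s (x + h • v) - φ s x) (φ s (x + h • w) - φ s x))
        (ω (F (φ s (x + h • v)) - F (φ s x)) (φ s (x + h • w) - φ s x)
          + ω (φ s (x + h • v) - φ s x) (F (φ s (x + h • w)) - F (φ s x))) s := by
      intro s
      have h1 := ω.hasFDerivAt.comp_hasDerivAt s (hdg v s)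
      exact h1.clm_apply (hdg w s)
    have hbd := norm_image_sub_le_of_norm_deriv_le_segment' (a := 0) (b := T)
      (C := ε * (2 * ‖ω‖ * C ^ 2 * ‖v‖ * ‖w‖) * h ^ 2)
      (fun s _ => (hder s).hasDerivWithinAt) (by
        intro s hs
        have hs := Ico_subset_Icc_self hs
        obtain ⟨v1, v2⟩ := fact v hv s hs
        obtain ⟨w1, w2⟩ := fact w hw s hs
        set dv := φ s (x + h • v) - φ s x
        set dw := φ s (x + h • w) - φ s x
        set L := fderiv ℝ F (φ s x)
        set Fv := F (φ s (x + h • v)) - F (φ s x)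
        set Fw := F (φ s (x + h • w)) - F (φ s x)
        have e : ω Fv dw + ω dv Fw = ω (Fv - L dv) dw + ω dv (Fw - L dw) := by
          have := hω (φ s x) dv dw
          simp only [map_sub, sub_apply]
          linarith
        rw [e]
        calc _ ≤ ‖ω (Fv - L dv) dw‖ + ‖ω dv (Fw - L dw)‖ := norm_add_le _ _
          _ ≤ ‖ω‖ * ‖Fv - L dv‖ * ‖dw‖ + ‖ω‖ * ‖dv‖ * ‖Fw - L dw‖ :=
            add_le_add (ω.le_opNorm₂ _ _) (ω.le_opNorm₂ _ _)
          _ ≤ ‖ω‖ * (ε * (h * ‖v‖ * C)) * (h * ‖w‖ * C)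
              + ‖ω‖ * (h * ‖v‖ * C) * (ε * (h * ‖w‖ * C)) := by gcongr
          _ = _ := by ring) T ⟨hT, le_rfl⟩
    have e2 : ω (h⁻¹ • (φ T (x + h • v) - φ T x)) (h⁻¹ • (φ T (x + h • w) - φ T x)) - ω v w
        = (h ^ 2)⁻¹ * (ω (φ T (x + h • v) - φ T x) (φ T (x + h • w) - φ T x)
          - ω (φ 0 (x + h • v) - φ 0 x) (φ 0 (x + h • w) - φ 0 x)) := by
      simp only [hφ0, id, add_sub_cancel_left, map_smul, smul_apply,
        smul_eq_mul]
      field_simp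
    rw [e2, norm_mul, norm_inv, Real.norm_of_nonneg (by positivity : (0 : ℝ) ≤ h ^ 2),
      inv_mul_le_iff₀ (by positivity)]
    refine hbd.trans (le_of_eq ?_)
    ring
  have hz : ‖ω (fderiv ℝ (φ T) x v) (fderiv ℝ (φ T) x w) - ω v w‖ ≤ 0 := by
    have ht : Tendsto (fun ε : ℝ => ε * (2 * ‖ω‖ * C ^ 2 * ‖v‖ * ‖w‖ * T)) (𝓝[>] 0) (𝓝 0) := by
      have : Tendsto (fun ε : ℝ => ε * (2 * ‖ω‖ * C ^ 2 * ‖v‖ * ‖w‖ * T)) (𝓝 0)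
          (𝓝 (0 * (2 * ‖ω‖ * C ^ 2 * ‖v‖ * ‖w‖ * T))) :=
        tendsto_id.mul_const _
      rw [zero_mul] at this
      exact this.mono_left nhdsWithin_le_nhds
    refine ge_of_tendsto ht ?_
    filter_upwards [self_mem_nhdsWithin] with ε hε using key ε hε
  exact sub_eq_zero.1 (norm_le_zero_iff.1 hz)

/-- Both time directions. -/
lemma aux_form' [ProperSpace E] (F : E → E) (hF : ContDiff ℝ 1 F) (φ : ℝ → E → E)
    (hφ0 : φ 0 = id)
    (hφ : ∀ x t, HasDerivAt (fun s : ℝ => φ s x) (F (φ t x)) t)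
    (ω : E →L[ℝ] E →L[ℝ] ℝ)
    (hω : ∀ y a b, ω (fderiv ℝ F y a) b + ω a (fderiv ℝ F y b) = 0)
    (T : ℝ) (hd : Differentiable ℝ (φ T)) (x v w : E) :
    ω (fderiv ℝ (φ T) x v) (fderiv ℝ (φ T) x w) = ω v w := by
  rcases le_total 0 T with hT | hT
  · exact aux_form F hF φ hφ0 hφ ω hω T hT hd x v w
  · have := aux_form (fun y => - F y) hF.neg (fun t => φ (-t)) (by simpa using hφ0)
      (fun x t => by
        have h1 := (hφ x (-t)).scomp t (hasDerivAt_neg t)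
        simpa [Function.comp_def] using h1) ω
      (fun y a b => by
        have h1 := hω y a b
        have h2 : fderiv ℝ (fun y => - F y) y = - fderiv ℝ F y := fderiv_fun_neg
        simp only [h2, neg_apply, map_neg]
        linarith) (-T) (by linarith) (by simpa using hd) x v w
    simpa using this

/-- A linear map preserving a nondegenerate bilinear form has determinant `±1`. -/
lemma aux_det [FiniteDimensional ℝ E] (ω : E →L[ℝ] E →L[ℝ] ℝ)
    (hnd : ∀ v, (∀ w, ω v w = 0) → v = 0)
    (A : E →L[ℝ] E) (hA : ∀ v w, ω (A v) (A w) = ω v w) : |A.det| = 1 := by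
  classical
  let B : LinearMap.BilinForm ℝ E :=
    LinearMap.mk₂ ℝ (fun v w => ω v w) (by simp) (by simp) (by simp) (by simp)
  have hB : B.comp (A : E →ₗ[ℝ] E) (A : E →ₗ[ℝ] E) = B := by
    ext v w
    exact hA v w
  let b := Module.finBasis ℝ E
  have hBn : B.Nondegenerate := by
    rw [LinearMap.BilinForm.nondegenerate_iff_ker_eq_bot, LinearMap.ker_eq_bot']
    intro v hv
    exact hnd v fun w => by
      have := congrArg (fun f => f w) hv
      exact this
  have hdet : (LinearMap.BilinForm.toMatrix b B).det ≠ 0 :=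
    (LinearMap.BilinForm.nondegenerate_iff_det_ne_zero b).1 hBn
  have h1 := LinearMap.BilinForm.toMatrix_comp b b B (A : E →ₗ[ℝ] E) (A : E →ₗ[ℝ] E)
  rw [hB] at h1
  have h2 := congrArg Matrix.det h1
  rw [Matrix.det_mul, Matrix.det_mul, Matrix.det_transpose, LinearMap.det_toMatrix] at h2
  have h3 : A.det ^ 2 = 1 := by
    have : (LinearMap.BilinForm.toMatrix b B).det * A.det ^ 2
        = (LinearMap.BilinForm.toMatrix b B).det * 1 := by
      rw [mul_one]
      conv_rhs => rw [h2]
      change _ * (LinearMap.det (A : E →ₗ[ℝ] E)) ^ 2 = _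
      ring
    exact mul_left_cancel₀ hdet this
  rcases sq_eq_sq_iff_eq_or_eq_neg.1 (h3.trans (one_pow 2).symm) with h | h <;> simp [h]

end Aux

section Ham

variable {V : Type*} [NormedAddCommGroup V] [InnerProductSpace ℝ V]

/-- The canonical symplectic form. -/
noncomputable def auxOmega : (V × V) →L[ℝ] (V × V) →L[ℝ] ℝ :=
  (innerSL ℝ).bilinearComp (ContinuousLinearMap.fst ℝ V V) (ContinuousLinearMap.snd ℝ V V)
    - (innerSL ℝ).bilinearComp (ContinuousLinearMap.snd ℝ V V) (ContinuousLinearMap.fst ℝ V V)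

lemma auxOmega_apply (a b : V × V) :
    auxOmega a b = inner ℝ a.1 b.2 - inner ℝ a.2 b.1 := by
  simp [auxOmega]

lemma auxOmega_nondeg (v : V × V) (h : ∀ w, auxOmega v w = 0) : v = 0 := by
  have h1 := h (0, v.1)
  have h2 := h (v.2, 0)
  simp [auxOmega_apply] at h1 h2
  exact Prod.ext h1 h2

lemma aux_ham_main [FiniteDimensional ℝ V] [MeasurableSpace V] [BorelSpace V]
    (U : V → ℝ) (hU : ContDiff ℝ 2 U) (P : V →L[ℝ] V)
    (hP : ∀ a b, inner ℝ (P a) b = inner ℝ a (P b))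
    (H : V × V → ℝ) (hH : ∀ x, H x = U x.1 + (1 / 2) * inner ℝ x.2 (P x.2))
    (F : V × V → V × V) (hF : ∀ x, F x = (P x.2, -(gradient U x.1)))
    (φ : ℝ → V × V → V × V) (hφ0 : φ 0 = id)
    (hφ : ∀ x t, HasDerivAt (fun s : ℝ => φ s x) (F (φ t x)) t)
    (t : ℝ) (hc : ContDiff ℝ 1 (φ t)) (hb : Function.Bijective (φ t)) :
    MeasurePreserving (φ t)
        ((volume : Measure (V × V)).withDensity fun x => ENNReal.ofReal (Real.exp (-(H x))))
        (volume.withDensity fun x => ENNReal.ofReal (Real.exp (-(H x)))) := by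
  have hFe : F = fun x => (P x.2, -(gradient U x.1)) := funext hF
  have hdU : Differentiable ℝ U := hU.differentiable (by norm_num)
  have hdU1 : ContDiff ℝ 1 (fderiv ℝ U) := hU.fderiv_right (by norm_num)
  have hgrad : gradient U = fun y => (InnerProductSpace.toDual ℝ V).symm (fderiv ℝ U y) := rfl
  have hg1 : ContDiff ℝ 1 (gradient U) := by
    rw [hgrad]
    exact (InnerProductSpace.toDual ℝ V).symm.contDiff.comp hdU1
  have hFC : ContDiff ℝ 1 F := by
    rw [hFe]
    exact (P.contDiff.comp contDiff_snd).prodMk (hg1.comp contDiff_fst).neg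
  have hgi : ∀ y a, inner ℝ (gradient U y) a = fderiv ℝ U y a := fun y a => by
    simp [hgrad]
  have hhess : ∀ y a b, inner ℝ (fderiv ℝ (gradient U) y a) b = fderiv ℝ (fderiv ℝ U) y a b := by
    intro y a b
    have h1 : HasFDerivAt (gradient U) (fderiv ℝ (gradient U) y) y :=
      ((hg1.differentiable (by norm_num)) y).hasFDerivAt
    have h2 : HasFDerivAt (fderiv ℝ U) (fderiv ℝ (fderiv ℝ U) y) y :=
      ((hdU1.differentiable (by norm_num)) y).hasFDerivAt
    have h3 := h1.inner ℝ (hasFDerivAt_const b y)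
    have h4 := h2.clm_apply (hasFDerivAt_const b y)
    have h5 : (fun z => inner ℝ (gradient U z) b) = fun z => fderiv ℝ U z b :=
      funext fun z => hgi z b
    rw [h5] at h3
    have := congrArg (fun f => f a) (h3.unique h4)
    simpa using this
  have hsymm : ∀ y a b, fderiv ℝ (fderiv ℝ U) y a b = fderiv ℝ (fderiv ℝ U) y b a := by
    intro y a b
    exact (hU.contDiffAt.isSymmSndFDerivAt (by simp)) a b
  have hFd : ∀ y a, fderiv ℝ F y a = (P a.2, -(fderiv ℝ (gradient U) y.1 a.1)) := by
    intro y a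
    have h1 : HasFDerivAt (gradient U) (fderiv ℝ (gradient U) y.1) y.1 :=
      ((hg1.differentiable (by norm_num)) y.1).hasFDerivAt
    have h2 := (P.hasFDerivAt.comp y (hasFDerivAt_snd (𝕜 := ℝ) (p := y))).prodMk
      (h1.comp y (hasFDerivAt_fst (𝕜 := ℝ) (p := y))).neg
    rw [hFe]
    exact congrArg (fun f => f a) h2.fderiv
  have hω : ∀ y a b, auxOmega (fderiv ℝ F y a) b + auxOmega a (fderiv ℝ F y b) = 0 := by
    intro y a b
    simp only [auxOmega_apply, hFd, inner_neg_left, inner_neg_right]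
    rw [hP, hhess, real_inner_comm (fderiv ℝ (gradient U) y.1 b.1) a.1, hhess, hsymm y.1 b.1 a.1]
    ring
  have hdet : ∀ x, |(fderiv ℝ (φ t) x).det| = 1 := fun x =>
    aux_det auxOmega auxOmega_nondeg _ fun v w =>
      aux_form' F hFC φ hφ0 hφ auxOmega hω t (hc.differentiable (by norm_num)) x v w
  -- energy conservation
  have hHd : ∀ x s, HasDerivAt (fun s => H (φ s x)) 0 s := by
    intro x s
    have h0 := hφ x s
    rw [hF] at h0
    have h1 : HasDerivAt (fun s => (φ s x).1) (P (φ s x).2) s := by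
      exact (hasFDerivAt_fst (𝕜 := ℝ) (p := φ s x)).comp_hasDerivAt s h0
    have h2 : HasDerivAt (fun s => (φ s x).2) (-(gradient U (φ s x).1)) s := by
      exact (hasFDerivAt_snd (𝕜 := ℝ) (p := φ s x)).comp_hasDerivAt s h0
    have h3 := ((hdU (φ s x).1).hasFDerivAt).comp_hasDerivAt s h1
    have h4 := h2.inner ℝ ((P.hasFDerivAt (x := (φ s x).2)).comp_hasDerivAt s h2)
    have h5 := h3.add (h4.const_mul (1 / 2))
    have e : (fun s => H (φ s x)) = fun s => U (φ s x).1
        + (1 / 2) * inner ℝ (φ s x).2 (P (φ s x).2) := funext fun s => hH _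
    rw [e]
    refine h5.congr_deriv ?_
    simp only [map_neg, inner_neg_left, inner_neg_right, Function.comp_apply]
    rw [← hP, real_inner_comm (gradient U _) (P _), hgi]
    ring
  have hHc : ∀ x, H (φ t x) = H x := by
    intro x
    have := is_const_of_deriv_eq_zero (fun s => (hHd x s).differentiableAt)
      (fun s => (hHd x s).deriv) t 0
    simpa [hφ0] using this
  have hHaar : (volume : Measure (V × V)).IsAddHaarMeasure := by
    rw [Measure.volume_eq_prod]
    infer_instance
  have hmeas : Measurable (φ t) := hc.continuous.measurable
  refine ⟨hmeas, ?_⟩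
  ext s hs
  rw [Measure.map_apply hmeas hs, withDensity_apply _ (hmeas hs), withDensity_apply _ hs]
  have himg : φ t '' (φ t ⁻¹' s) = s := Set.image_preimage_eq s hb.2
  conv_rhs => rw [← himg]
  rw [lintegral_image_eq_lintegral_abs_det_fderiv_mul volume (hmeas hs)
    (fun x _ => ((hc.differentiable (by norm_num)) x).hasFDerivAt.hasFDerivWithinAt)
    hb.1.injOn]
  simp [hdet, hHc]

end Ham

/-- The Hamiltonian flow of `F(θ, r) = (M⁻¹ r, −∇U(θ))` preserves the Gibbs
measure with density `exp(−H(θ, r))` with respect to Lebesgue measure, where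
`H(θ, r) = U(θ) + (1/2)⟨r, M⁻¹ r⟩`. -/
theorem hamiltonian_flow_preserves_gibbs_measure
    {p : ℕ} (U : EuclideanSpace ℝ (Fin p) → ℝ) (hU : ContDiff ℝ 2 U)
    (M : Matrix (Fin p) (Fin p) ℝ) (hMsymm : M.IsSymm) (hMpd : M.PosDef)
    (H : EuclideanSpace ℝ (Fin p) × EuclideanSpace ℝ (Fin p) → ℝ)
    (hH : ∀ x : EuclideanSpace ℝ (Fin p) × EuclideanSpace ℝ (Fin p),
      H x = U x.1 + (1 / 2) * ⟪x.2, Matrix.toEuclideanLin M⁻¹ x.2⟫)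
    (F : EuclideanSpace ℝ (Fin p) × EuclideanSpace ℝ (Fin p) →
      EuclideanSpace ℝ (Fin p) × EuclideanSpace ℝ (Fin p))
    (hF : ∀ x : EuclideanSpace ℝ (Fin p) × EuclideanSpace ℝ (Fin p),
      F x = (Matrix.toEuclideanLin M⁻¹ x.2, -(gradient U x.1)))
    (φ : ℝ → (EuclideanSpace ℝ (Fin p) × EuclideanSpace ℝ (Fin p)) →
      EuclideanSpace ℝ (Fin p) × EuclideanSpace ℝ (Fin p))
    -- φ is a global flow of F:
    (hφ0 : φ 0 = id)
    (hφderiv : ∀ (x : EuclideanSpace ℝ (Fin p) × EuclideanSpace ℝ (Fin p)) (t : ℝ),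
      HasDerivAt (fun s : ℝ => φ s x) (F (φ t x)) t)
    -- each φₜ is a C¹ diffeomorphism:
    (hφdiffeo : ∀ t : ℝ,
      ∃ ψ : (EuclideanSpace ℝ (Fin p) × EuclideanSpace ℝ (Fin p)) →
        EuclideanSpace ℝ (Fin p) × EuclideanSpace ℝ (Fin p),
        ContDiff ℝ 1 (φ t) ∧ ContDiff ℝ 1 ψ ∧
        Function.LeftInverse ψ (φ t) ∧ Function.RightInverse ψ (φ t)) :
    ∀ t : ℝ,
      MeasurePreserving (φ t)
        (volume.withDensity fun x => ENNReal.ofReal (Real.exp (-(H x))))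
        (volume.withDensity fun x => ENNReal.ofReal (Real.exp (-(H x)))) := by
  intro t
  obtain ⟨ψ, hc, -, hl, hr⟩ := hφdiffeo t
  have hinv : (M⁻¹).IsHermitian := hMpd.isHermitian.inv
  refine aux_ham_main U hU (LinearMap.toContinuousLinearMap (Matrix.toEuclideanLin M⁻¹)) ?_ H
    (by simpa using hH) F (by simpa using hF) φ hφ0 hφderiv t hc ⟨hl.injective, hr.surjective⟩
  intro a b
  exact (Matrix.isSymmetric_toEuclideanLin_iff.2 hinv) a b
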